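/- Let P be S_k or A_k acting naturally on {1,…,k} with k ≥ 2, let Q = P_1 ≅ S_{k−1} or A_{k−1}, let T be a nonabelian simple group, and let φ: Q → Aut(T) be a homomorphism with Inn(T) ≤ φ(Q). Then T ≅ A_{k−1} and k ≥ 6. -/

import Mathlib

/-!
The even permutations in the stabiliser `Q` of `a` are the alternating group `A` on the remaining
points, and `Q` modulo them is abelian, so the image of `A` still contains the perfect group
`Inn T`. Hence `A` is not solvable, and is therefore simple. Since `Inn T` is normal in `Aut T`, its
preimage in `A` is a nontrivial normal subgroup, hence all of `A`, while the kernel is trivial;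
so `A`, `Inn T` and `T` are isomorphic.
-/

section

variable {G H : Type*} [Group G] [Group H]

theorem isPerfect_of_not_isMulCommutative [IsSimpleGroup G] (hG : ¬ IsMulCommutative G) :
    Group.IsPerfect G :=
  Group.isPerfect_def.2 <| (inferInstance : (commutator G).Normal).eq_bot_or_eq_top.resolve_left
    fun h => hG ((commutator_eq_bot_iff G).1 h)

theorem center_eq_bot_of_not_isMulCommutative [IsSimpleGroup G] (hG : ¬ IsMulCommutative G) :
    Subgroup.center G = ⊥ :=
  (inferInstance : (Subgroup.center G).Normal).eq_bot_or_eq_top.resolve_right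
    fun h => hG (Subgroup.center_eq_top_iff.1 h)

theorem ker_conj_eq_center : (MulAut.conj (G := G)).ker = Subgroup.center G := by
  ext g
  simp only [MonoidHom.mem_ker, MulEquiv.ext_iff, MulAut.conj_apply, MulAut.one_apply,
    mul_inv_eq_iff_eq_mul, Subgroup.mem_center_iff]
  exact forall_congr' fun _ => eq_comm

theorem normal_range_conj : (MulAut.conj (G := G)).range.Normal where
  conj_mem := by
    rintro _ ⟨g, rfl⟩ f
    exact ⟨f g, by ext x; simp [MulAut.conj_apply]⟩

theorem le_map_of_commutator_le {φ : H →* G} {N : Subgroup G} [Group.IsPerfect N]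
    (hN : N ≤ φ.range) {K : Subgroup H} (hK : commutator H ≤ K) : N ≤ K.map φ :=
  calc
    N = ⁅N, N⁆ := N.commutator_eq_self.symm
    _ ≤ ⁅φ.range, φ.range⁆ := Subgroup.commutator_mono hN hN
    _ = (commutator H).map φ := by
      rw [commutator_def, Subgroup.map_commutator, MonoidHom.range_eq_map]
    _ ≤ K.map φ := Subgroup.map_mono hK

theorem not_isSolvable_of_le_range {f : H →* G} {N : Subgroup G} [Group.IsPerfect N]
    [Nontrivial N] (hN : N ≤ f.range) : ¬ Group.IsSolvable H := by
  intro hH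
  have : Group.IsSolvable f.range := Group.isSolvable_of_surjective f.rangeRestrict_surjective
  exact Group.IsPerfect.not_isSolvable N
    (Group.isSolvable_of_isSolvable_injective (Subgroup.inclusion_injective hN))

theorem nonempty_mulEquiv_of_normal_le_range [IsSimpleGroup H] {f : H →* G} {N : Subgroup G}
    [N.Normal] [Nontrivial N] (hN : N ≤ f.range) : Nonempty (N ≃* H) := by
  have hN_ne_bot : N ≠ ⊥ := N.nontrivial_iff_ne_bot.1 inferInstance
  have hker : f.ker = ⊥ := by
    refine f.normal_ker.eq_bot_or_eq_top.resolve_right fun h => hN_ne_bot ?_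
    rwa [MonoidHom.ker_eq_top_iff.1 h, MonoidHom.range_one, le_bot_iff] at hN
  have hcomap : N.comap f = ⊤ := by
    refine (Subgroup.Normal.comap ‹N.Normal› f).eq_bot_or_eq_top.resolve_left fun h => hN_ne_bot ?_
    rw [← Subgroup.map_comap_eq_self hN, h, Subgroup.map_bot]
  have hrange : N = f.range := by
    rw [← Subgroup.map_comap_eq_self hN, hcomap, MonoidHom.range_eq_map]
  exact ⟨(MulEquiv.subgroupCongr hrange).trans
    (MonoidHom.ofInjective (f.ker_eq_bot_iff.1 hker)).symm⟩

end

section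

variable {α : Type*} [Fintype α] [DecidableEq α]

theorem isSolvable_alternatingGroup_of_card_le_four (hα : Nat.card α ≤ 4) :
    Group.IsSolvable (alternatingGroup α) := by
  obtain h | h := hα.lt_or_eq
  · have := alternatingGroup.isMulCommutative_of_card_le_three (Nat.le_of_lt_succ h)
    exact Group.isSolvable_of_comm mul_comm'
  · have hV := (alternatingGroup.kleinFour_isKleinFour h).isMulCommutative
    refine ⟨2, ?_⟩
    rw [derivedSeries_succ, derivedSeries_one, ← alternatingGroup.kleinFour_eq_commutator h]
    exact Subgroup.commutator_self_eq_bot_iff.2 hV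

theorem nonempty_mulEquiv_alternatingGroup_of_le_range {G : Type*} [Group G]
    {f : alternatingGroup α →* G} {N : Subgroup G} [N.Normal] [Group.IsPerfect N] [Nontrivial N]
    (hN : N ≤ f.range) : Nonempty (N ≃* alternatingGroup α) ∧ 5 ≤ Nat.card α := by
  have hα : 5 ≤ Nat.card α := by
    by_contra! h
    exact not_isSolvable_of_le_range hN
      (isSolvable_alternatingGroup_of_card_le_four (Nat.le_of_lt_succ h))
  have := alternatingGroup.isSimpleGroup hα
  exact ⟨nonempty_mulEquiv_of_normal_le_range hN, hα⟩

variable {P : Subgroup (Equiv.Perm α)}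

/-- The inclusion of the alternating group on the points other than `a` into the stabiliser of `a`
in a permutation group `P` containing all even permutations. Its image is the group of even
elements of the stabiliser. -/
def alternatingGroupToStabilizer (hP : alternatingGroup α ≤ P) (a : α) :
    alternatingGroup {x // x ≠ a} →* MulAction.stabilizer P a :=
  ((Equiv.Perm.ofSubtype.comp (alternatingGroup {x // x ≠ a}).subtype).codRestrict P fun σ =>
    hP <| Equiv.Perm.mem_alternatingGroup.2 <| (Equiv.Perm.sign_ofSubtype _).trans σ.2).codRestrict
      _ fun σ => Equiv.Perm.ofSubtype_apply_of_not_mem σ.1 (not_not.2 rfl)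

theorem mem_range_alternatingGroupToStabilizer (hP : alternatingGroup α ≤ P) {a : α}
    {g : MulAction.stabilizer P a} (hg : Equiv.Perm.sign (g : Equiv.Perm α) = 1) :
    g ∈ (alternatingGroupToStabilizer hP a).range := by
  have hga : (g : Equiv.Perm α) a = a := g.2
  obtain ⟨σ, hσ⟩ : (g : Equiv.Perm α) ∈
      (Equiv.Perm.ofSubtype : Equiv.Perm {x // x ≠ a} →* Equiv.Perm α).range := by
    rw [Equiv.Perm.mem_range_ofSubtype_iff]
    rintro x hx rfl
    exact Equiv.Perm.mem_support.1 hx hga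
  have hσ_even : σ ∈ alternatingGroup {x // x ≠ a} := by
    rwa [Equiv.Perm.mem_alternatingGroup, ← Equiv.Perm.sign_ofSubtype, hσ]
  exact ⟨⟨σ, hσ_even⟩, Subtype.ext (Subtype.ext hσ)⟩

theorem commutator_stabilizer_le_range (hP : alternatingGroup α ≤ P) (a : α) :
    commutator (MulAction.stabilizer P a) ≤ (alternatingGroupToStabilizer hP a).range := fun _ hg =>
  mem_range_alternatingGroupToStabilizer hP <| Abelianization.commutator_subset_ker
    (Equiv.Perm.sign.comp (P.subtype.comp (MulAction.stabilizer P a).subtype)) hg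

theorem nonempty_mulEquiv_alternatingGroup_of_le_range_stabilizer {G : Type*} [Group G]
    (hP : alternatingGroup α ≤ P) {a : α} {φ : MulAction.stabilizer P a →* G} {N : Subgroup G}
    [N.Normal] [Group.IsPerfect N] [Nontrivial N] (hN : N ≤ φ.range) :
    Nonempty (N ≃* alternatingGroup {x // x ≠ a}) ∧ 6 ≤ Fintype.card α := by
  have hN' : N ≤ (φ.comp (alternatingGroupToStabilizer hP a)).range :=
    (le_map_of_commutator_le hN (commutator_stabilizer_le_range hP a)).trans_eq
      (MonoidHom.map_range _ _)
  obtain ⟨e, hcard⟩ := nonempty_mulEquiv_alternatingGroup_of_le_range hN'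
  refine ⟨e, ?_⟩
  have hne : Nat.card {x // x ≠ a} = Fintype.card α - 1 := by simp
  omega

theorem stmt16_general (hP : alternatingGroup α ≤ P) (a : α) {T : Type*} [Group T] [Nontrivial T]
    [Group.IsPerfect T] (hT : Subgroup.center T = ⊥) (φ : MulAction.stabilizer P a →* MulAut T)
    (hInn : (MulAut.conj (G := T)).range ≤ φ.range) :
    Nonempty (T ≃* alternatingGroup (Fin (Fintype.card α - 1))) ∧ 6 ≤ Fintype.card α := by
  have hconj : Function.Injective (MulAut.conj (G := T)) := by
    rw [← MonoidHom.ker_eq_bot_iff, ker_conj_eq_center, hT]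
  let eInn : T ≃* (MulAut.conj (G := T)).range := MonoidHom.ofInjective hconj
  have := normal_range_conj (G := T)
  have := Group.IsPerfect.range (MulAut.conj (G := T))
  have := eInn.symm.toEquiv.nontrivial
  obtain ⟨⟨e⟩, hcard⟩ := nonempty_mulEquiv_alternatingGroup_of_le_range_stabilizer hP hInn
  let eFin : {x // x ≠ a} ≃ Fin (Fintype.card α - 1) := Fintype.equivOfCardEq (by simp)
  exact ⟨⟨(eInn.trans e).trans eFin.altCongrHom⟩, hcard⟩

end

/-- If `P` is `S_k` or `A_k` acting naturally on `{1,…,k}` (`k ≥ 2`), `Q` is a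
point stabiliser, `T` is a nonabelian simple group and `φ : Q → Aut(T)` satisfies
`Inn(T) ≤ φ(Q)`, then `T ≅ A_{k−1}` and `k ≥ 6`. -/
theorem stmt16 {k : ℕ} (hk : 2 ≤ k) (P : Subgroup (Equiv.Perm (Fin k)))
    (hP : P = ⊤ ∨ P = alternatingGroup (Fin k))
    {T : Type*} [Group T] [Finite T]
    (hT : IsSimpleGroup T) (hTnab : ∃ a b : T, a * b ≠ b * a)
    (φ : MulAction.stabilizer P (⟨0, by omega⟩ : Fin k) →* MulAut T)
    (hInn : (MulAut.conj (G := T)).range ≤ φ.range) :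
    Nonempty (T ≃* alternatingGroup (Fin (k - 1))) ∧ 6 ≤ k := by
  have hT' : ¬ IsMulCommutative T := by simpa [isMulCommutative_iff] using hTnab
  have := isPerfect_of_not_isMulCommutative hT'
  exact Fintype.card_fin k ▸ stmt16_general (hP.elim (fun h => h ▸ le_top) fun h => h.ge) _
    (center_eq_bot_of_not_isMulCommutative hT') φ hInn
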